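/- Fix k ≥ 1 and 0 < Δ < Δ_k, and for each n ≥ k let m = ⌈Δ n⌉. Then the total variation distance between P_unif and P_planted, namely (1/2) Σ_V |P_planted(V) − P_unif(V)| where the sum runs over all m-tuples V of k-flats of F_2^n, tends to 0 as n → ∞. -/

import Mathlib

open scoped BigOperators Classical
open Filter Topology

abbrev F2n (n : ℕ) := Fin n → ZMod 2

def IsFlat (n k : ℕ) (W : Set (F2n n)) : Prop :=
  ∃ A : AffineSubspace (ZMod 2) (F2n n),
    (A : Set (F2n n)) = W ∧ W.Nonempty ∧ Module.finrank (ZMod 2) A.direction = n - k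

def Flat (n k : ℕ) : Type := {W : Set (F2n n) // IsFlat n k W}

noncomputable instance (n k : ℕ) : Fintype (Flat n k) := by
  unfold Flat; exact Fintype.ofFinite _

noncomputable def q0 (n k : ℕ) : Flat n k → ℝ :=
  fun _ => (Fintype.card (Flat n k) : ℝ)⁻¹

noncomputable def qx (n k : ℕ) (x : F2n n) : Flat n k → ℝ :=
  fun W => if x ∈ W.1 then 0 else (Nat.card {W : Flat n k // x ∉ W.1} : ℝ)⁻¹

noncomputable def prob {α : Type*} [Fintype α] (p : α → ℝ) (E : Set α) : ℝ :=
  ∑ a, if a ∈ E then p a else 0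

noncomputable def expect {α : Type*} [Fintype α] (p : α → ℝ) (f : α → ℝ) : ℝ :=
  ∑ a, p a * f a

noncomputable def Punif (n k m : ℕ) : (Fin m → Flat n k) → ℝ :=
  fun V => ∏ j, q0 n k (V j)

noncomputable def Pplanted (n k m : ℕ) : (Fin m → Flat n k) → ℝ :=
  fun V => ((2:ℝ)^n)⁻¹ * ∑ x : F2n n, ∏ j, qx n k x (V j)

noncomputable def Z (n k m : ℕ) (V : Fin m → Flat n k) : ℕ :=
  Nat.card {x : F2n n // ∀ j, x ∉ (V j).1}

noncomputable def satCount (n k m : ℕ) (V : Fin m → Flat n k) (x : F2n n) : ℕ :=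
  Nat.card {j : Fin m // x ∉ (V j).1}

noncomputable def maxSat (n k m : ℕ) (V : Fin m → Flat n k) : ℕ :=
  Finset.univ.sup (fun x : F2n n => satCount n k m V x)

noncomputable def qxpi (n k : ℕ) (x : F2n n) (π : ℝ) : Flat n k → ℝ :=
  fun W => (1 - π) * q0 n k W + π * qx n k x W

noncomputable def Pplantedpi (n k m : ℕ) (π : ℝ) : (Fin m → Flat n k) → ℝ :=
  fun V => ((2:ℝ)^n)⁻¹ * ∑ x : F2n n, ∏ j, qxpi n k x π (V j)

noncomputable def DeltaK (k : ℕ) : ℝ :=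
  Real.log (1/2) / Real.log (1 - ((2:ℝ)^k)⁻¹)

noncomputable def ind {n k : ℕ} (x : F2n n) (W : Flat n k) : ℝ := if x ∈ W.1 then 1 else 0

lemma isFlat_image {n k : ℕ} (e : F2n n ≃ᵃ[ZMod 2] F2n n) {W : Set (F2n n)} (h : IsFlat n k W) :
    IsFlat n k (e '' W) := by
  obtain ⟨A, hA, hne, hd⟩ := h
  refine ⟨A.map e.toAffineMap, ?_, hne.image _, ?_⟩
  · rw [AffineSubspace.coe_map, hA]; rfl
  · rw [AffineSubspace.map_direction, ← hd]
    exact LinearEquiv.finrank_map_eq e.linear A.direction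

noncomputable def flatMap {n k : ℕ} (e : F2n n ≃ᵃ[ZMod 2] F2n n) : Flat n k ≃ Flat n k where
  toFun W := ⟨e '' W.1, isFlat_image e W.2⟩
  invFun W := ⟨e.symm '' W.1, isFlat_image e.symm W.2⟩
  left_inv W := by
    apply Subtype.ext
    simp [Set.image_image]
  right_inv W := by
    apply Subtype.ext
    exact e.toEquiv.image_symm_image W.1

lemma ind_flatMap {n k : ℕ} (e : F2n n ≃ᵃ[ZMod 2] F2n n) (x : F2n n) (W : Flat n k) :
    ind (e x) (flatMap e W) = ind x W := by
  have h : e x ∈ (flatMap e W).1 ↔ x ∈ W.1 := e.injective.mem_set_image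
  unfold ind
  simp only [h]

lemma sum_b_map {n k : ℕ} (e : F2n n ≃ᵃ[ZMod 2] F2n n) (x y : F2n n) :
    ∑ W : Flat n k, ind (e x) W * ind (e y) W = ∑ W : Flat n k, ind x W * ind y W := by
  symm
  apply Fintype.sum_equiv (flatMap e)
  intro W
  rw [ind_flatMap, ind_flatMap]

lemma exists_lin {n : ℕ} (v w : F2n n) (hv : v ≠ 0) (hw : w ≠ 0) :
    ∃ g : F2n n ≃ₗ[ZMod 2] F2n n, g v = w := by
  let f := (LinearEquiv.toSpanNonzeroSingleton (ZMod 2) (F2n n) v hv).symm ≪≫ₗ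
    LinearEquiv.toSpanNonzeroSingleton (ZMod 2) (F2n n) w hw
  obtain ⟨g, hg⟩ := Submodule.exists_linearEquiv_restrict_eq f
  refine ⟨g, ?_⟩
  have h := hg (LinearEquiv.toSpanNonzeroSingleton (ZMod 2) (F2n n) v hv 1)
  simp only [f, LinearEquiv.trans_apply, LinearEquiv.symm_apply_apply] at h
  simpa using h.symm

lemma exists_aff {n : ℕ} (x y x' y' : F2n n) (h : y ≠ x) (h' : y' ≠ x') :
    ∃ e : F2n n ≃ᵃ[ZMod 2] F2n n, e x = x' ∧ e y = y' := by
  obtain ⟨g, hg⟩ := exists_lin (y - x) (y' - x') (sub_ne_zero.2 h) (sub_ne_zero.2 h')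
  refine ⟨g.toAffineEquiv.trans (AffineEquiv.constVAdd (ZMod 2) (F2n n) (x' - g x)), ?_, ?_⟩
  · simp
  · rw [map_sub] at hg
    simp only [AffineEquiv.trans_apply, LinearEquiv.coe_toAffineEquiv, AffineEquiv.constVAdd_apply,
      vadd_eq_add]
    have : g y = y' - x' + g x := by rw [← hg]; abel
    rw [this]; abel

lemma sum_ind_pt {n k : ℕ} (W : Flat n k) : ∑ x : F2n n, ind x W = (2:ℝ) ^ (n - k) := by
  obtain ⟨W, A, hA, hne, hd⟩ := W
  subst hA
  unfold ind
  rw [← Finset.sum_filter, Finset.sum_const, nsmul_eq_mul, mul_one]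
  obtain ⟨p, hp⟩ := hne
  have h1 : Fintype.card A.direction = 2 ^ (n - k) := by
    rw [Module.card_eq_pow_finrank (K := ZMod 2), hd, ZMod.card]
  have h2 : (Finset.univ.filter (fun x : F2n n => x ∈ (A : Set (F2n n)))).card
      = Fintype.card A.direction := by
    rw [← Fintype.card_subtype]
    refine Fintype.card_congr ⟨fun x => ⟨x.1 - p, A.vsub_mem_direction x.2 hp⟩,
      fun v => ⟨v.1 + p, A.vadd_mem_of_mem_direction v.2 hp⟩, ?_, ?_⟩
    · intro x; simp
    · intro x; simp
  simp only at h2 ⊢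
  rw [h2, h1]; push_cast; rfl

lemma flat_nonempty {n k : ℕ} : Nonempty (Flat n k) := by
  let b : Fin (n - k) → F2n n := fun i => Pi.basisFun (ZMod 2) (Fin n) (Fin.castLE (Nat.sub_le _ _) i)
  have hb : LinearIndependent (ZMod 2) b :=
    (Pi.basisFun (ZMod 2) (Fin n)).linearIndependent.comp _ (Fin.castLE_injective _)
  refine ⟨⟨_, (Submodule.span (ZMod 2) (Set.range b)).toAffineSubspace, rfl, ⟨0, ?_⟩, ?_⟩⟩
  · simp
  · rw [Submodule.toAffineSubspace_direction, finrank_span_eq_card hb, Fintype.card_fin]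

lemma card_F2n (n : ℕ) : (Fintype.card (F2n n) : ℝ) = 2 ^ n := by
  simp [F2n, ZMod.card]

lemma sum_a {n k : ℕ} (hn : k ≤ n) (x : F2n n) :
    ∑ W : Flat n k, ind x W = (Fintype.card (Flat n k) : ℝ) * ((2:ℝ) ^ k)⁻¹ := by
  have hc : ∀ y : F2n n, ∑ W : Flat n k, ind y W = ∑ W : Flat n k, ind x W := by
    intro y
    have h := sum_b_map (k := k) (AffineEquiv.constVAdd (ZMod 2) (F2n n) (y - x)) x x
    have h2 : ∀ (z : F2n n) (W : Flat n k), ind z W * ind z W = ind z W := by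
      intro z W; unfold ind; split_ifs <;> simp
    simpa [h2] using h
  have h1 : ∑ y : F2n n, ∑ W : Flat n k, ind y W = Fintype.card (Flat n k) * (2:ℝ) ^ (n - k) := by
    rw [Finset.sum_comm]
    simp [sum_ind_pt]
  rw [Finset.sum_congr rfl (fun y _ => hc y), Finset.sum_const, Finset.card_univ, nsmul_eq_mul,
    card_F2n] at h1
  have h2 : (2:ℝ) ^ n = 2 ^ (n - k) * 2 ^ k := by rw [← pow_add]; congr 1; omega
  rw [h2] at h1
  have h3 : (0:ℝ) < 2 ^ (n - k) := by positivity
  have h4 : (0:ℝ) < 2 ^ k := by positivity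
  rw [← div_eq_mul_inv, eq_div_iff h4.ne']
  apply mul_left_cancel₀ h3.ne'
  linarith

lemma sum_b {n k : ℕ} (hn : k ≤ n) (x y : F2n n) (hxy : y ≠ x) :
    ∑ W : Flat n k, ind x W * ind y W ≤
      (Fintype.card (Flat n k) : ℝ) * ((2:ℝ) ^ k)⁻¹ * ((2:ℝ) ^ k)⁻¹ := by
  set c := ∑ W : Flat n k, ind x W * ind y W with hcdef
  set a := (Fintype.card (Flat n k) : ℝ) * ((2:ℝ) ^ k)⁻¹ with ha
  have ha0 : 0 ≤ a := by positivity
  have hc : ∀ z : F2n n, z ≠ x → ∑ W : Flat n k, ind x W * ind z W = c := by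
    intro z hz
    obtain ⟨e, h1, h2⟩ := exists_aff x y x z hxy hz
    have := sum_b_map (k := k) e x y
    rwa [h1, h2] at this
  have hxx : ∑ W : Flat n k, ind x W * ind x W = a := by
    rw [ha, ← sum_a hn x]
    apply Finset.sum_congr rfl
    intro W _; unfold ind; split_ifs <;> simp
  have h1 : ∑ z : F2n n, ∑ W : Flat n k, ind x W * ind z W = a * (2:ℝ) ^ (n - k) := by
    rw [Finset.sum_comm, ha, ← sum_a hn x, Finset.sum_mul]
    apply Finset.sum_congr rfl
    intro W _
    rw [← Finset.mul_sum, sum_ind_pt]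
  rw [← Finset.add_sum_erase _ _ (Finset.mem_univ x), hxx,
    Finset.sum_congr rfl (fun z hz => hc z (Finset.ne_of_mem_erase hz)), Finset.sum_const,
    Finset.card_erase_of_mem (Finset.mem_univ x), Finset.card_univ, nsmul_eq_mul,
    Nat.cast_sub (Fintype.card_pos), card_F2n] at h1
  have h2 : (2:ℝ) ^ n = 2 ^ (n - k) * 2 ^ k := by rw [← pow_add]; congr 1; omega
  have hu : (1:ℝ) ≤ 2 ^ (n - k) := one_le_pow₀ (by norm_num)
  have hK : (1:ℝ) ≤ 2 ^ k := one_le_pow₀ (by norm_num)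
  have hn1 : (1:ℝ) < 2 ^ n := by
    apply one_lt_pow₀ (by norm_num)
    rintro rfl
    exact hxy (Subsingleton.elim _ _)
  rw [← div_eq_mul_inv, le_div_iff₀ (by linarith)]
  have h3 : ((2:ℝ) ^ n - 1) * (c * 2 ^ k) ≤ ((2:ℝ) ^ n - 1) * a := by
    have : ((2:ℝ) ^ n - 1) * c = a * (2 ^ (n - k) - 1) := by
      push_cast at h1; linarith
    calc ((2:ℝ) ^ n - 1) * (c * 2 ^ k) = a * (2 ^ (n - k) - 1) * 2 ^ k := by rw [← this]; ring
      _ = a * (2 ^ n - 2 ^ k) := by rw [h2]; ring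
      _ ≤ a * (2 ^ n - 1) := by gcongr
      _ = _ := by ring
  exact le_of_mul_le_mul_left h3 (by linarith)

noncomputable def pk (k : ℕ) : ℝ := 1 - ((2:ℝ) ^ k)⁻¹

lemma card_not {n k : ℕ} (hn : k ≤ n) (x : F2n n) :
    (Nat.card {W : Flat n k // x ∉ W.1} : ℝ) = Fintype.card (Flat n k) * pk k := by
  have h : (Nat.card {W : Flat n k // x ∉ W.1} : ℝ) = ∑ W : Flat n k, (1 - ind x W) := by
    rw [Nat.card_eq_fintype_card, Fintype.card_subtype, Finset.card_filter]
    push_cast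
    apply Finset.sum_congr rfl
    intro W _; unfold ind; split_ifs <;> simp_all
  rw [h, Finset.sum_sub_distrib, sum_a hn]
  simp [pk]; ring

lemma qx_eq {n k : ℕ} (hn : k ≤ n) (x : F2n n) (W : Flat n k) :
    qx n k x W = (1 - ind x W) * (Fintype.card (Flat n k) * pk k)⁻¹ := by
  unfold qx
  rw [card_not hn]
  unfold ind
  split_ifs <;> simp

lemma pk_pos {k : ℕ} (hk : 1 ≤ k) : 0 < pk k := by
  have : (1:ℝ) < 2 ^ k := one_lt_pow₀ (by norm_num) (by omega)
  have := inv_lt_one_of_one_lt₀ this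
  unfold pk; linarith

lemma pk_lt (k : ℕ) : pk k < 1 := by
  have : (0:ℝ) < (2 ^ k)⁻¹ := by positivity
  unfold pk; linarith

lemma sum_qx {n k : ℕ} (hk : 1 ≤ k) (hn : k ≤ n) (x : F2n n) :
    ∑ W : Flat n k, qx n k x W = 1 := by
  have hN : (0:ℝ) < Fintype.card (Flat n k) := by
    have := flat_nonempty (n := n) (k := k)
    exact_mod_cast Fintype.card_pos
  have hp := pk_pos hk
  simp_rw [qx_eq hn]
  rw [← Finset.sum_mul, Finset.sum_sub_distrib, sum_a hn]
  simp only [Finset.sum_const, Finset.card_univ, nsmul_eq_mul, mul_one]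
  rw [show (Fintype.card (Flat n k) : ℝ) - Fintype.card (Flat n k) * (2 ^ k)⁻¹
    = Fintype.card (Flat n k) * pk k by unfold pk; ring]
  exact mul_inv_cancel₀ (by positivity)

lemma qx_nonneg {n k : ℕ} (x : F2n n) (W : Flat n k) : 0 ≤ qx n k x W := by
  unfold qx; split_ifs <;> positivity

lemma sum_qxx {n k : ℕ} (hk : 1 ≤ k) (hn : k ≤ n) (x : F2n n) :
    ∑ W : Flat n k, qx n k x W * qx n k x W = (Fintype.card (Flat n k) * pk k)⁻¹ := by
  have : ∀ W : Flat n k, qx n k x W * qx n k x W =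
      qx n k x W * (Fintype.card (Flat n k) * pk k)⁻¹ := by
    intro W
    rw [qx_eq hn]; unfold ind; split_ifs <;> simp
  simp_rw [this]
  rw [← Finset.sum_mul, sum_qx hk hn, one_mul]

lemma sum_qxy {n k : ℕ} (hk : 1 ≤ k) (hn : k ≤ n) (x y : F2n n) (hxy : y ≠ x) :
    ∑ W : Flat n k, qx n k x W * qx n k y W ≤ (Fintype.card (Flat n k) : ℝ)⁻¹ := by
  have hN : (0:ℝ) < Fintype.card (Flat n k) := by
    have := flat_nonempty (n := n) (k := k)
    exact_mod_cast Fintype.card_pos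
  have hp := pk_pos hk
  have h : ∀ W : Flat n k, qx n k x W * qx n k y W =
      (1 - ind x W - ind y W + ind x W * ind y W) *
        ((Fintype.card (Flat n k) * pk k)⁻¹ * (Fintype.card (Flat n k) * pk k)⁻¹) := by
    intro W
    rw [qx_eq hn, qx_eq hn]; ring
  simp_rw [h]
  rw [← Finset.sum_mul, Finset.sum_add_distrib, Finset.sum_sub_distrib, Finset.sum_sub_distrib,
    sum_a hn, sum_a hn]
  simp only [Finset.sum_const, Finset.card_univ, nsmul_eq_mul, mul_one]
  have hb := sum_b hn x y hxy
  set N : ℝ := (Fintype.card (Flat n k) : ℝ)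
  calc _ ≤ (N * pk k * pk k) * ((N * pk k)⁻¹ * (N * pk k)⁻¹) := by
        apply mul_le_mul_of_nonneg_right _ (by positivity)
        unfold pk; linarith
    _ = N⁻¹ := by field_simp

lemma tv_sq {n k : ℕ} (m : ℕ) (hk : 1 ≤ k) (hn : k ≤ n) :
    (∑ V : Fin m → Flat n k, |Pplanted n k m V - Punif n k m V|) ^ 2 ≤
      ((2:ℝ) ^ n)⁻¹ * (pk k ^ m)⁻¹ := by
  have hN : (0:ℝ) < Fintype.card (Flat n k) := by
    have := flat_nonempty (n := n) (k := k)
    exact_mod_cast Fintype.card_pos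
  have hp := pk_pos hk
  have hcard : (Fintype.card (Fin m → Flat n k) : ℝ) = (Fintype.card (Flat n k) : ℝ) ^ m := by
    rw [Fintype.card_fun, Fintype.card_fin]; push_cast; rfl
  have hU : ∀ V, Punif n k m V = ((Fintype.card (Flat n k) : ℝ) ^ m)⁻¹ := by
    intro V; simp [Punif, q0]
  have hprod : ∀ f : Flat n k → ℝ, ∑ V : Fin m → Flat n k, ∏ j, f (V j) = (∑ W, f W) ^ m := by
    intro f
    rw [← Fintype.prod_sum (fun (_ : Fin m) W => f W)]
    simp
  have hsum : ∑ V, Pplanted n k m V = 1 := by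
    unfold Pplanted
    rw [← Finset.mul_sum, Finset.sum_comm]
    simp_rw [hprod, sum_qx hk hn]
    simp only [one_pow, Finset.sum_const, Finset.card_univ, nsmul_eq_mul, mul_one, card_F2n]
    exact inv_mul_cancel₀ (by positivity)
  have hsq : ∑ V, Pplanted n k m V ^ 2 ≤
      ((2:ℝ) ^ n)⁻¹ * (((Fintype.card (Flat n k) : ℝ) * pk k) ^ m)⁻¹
        + ((Fintype.card (Flat n k) : ℝ) ^ m)⁻¹ := by
    have h1 : ∀ V, Pplanted n k m V ^ 2 = (((2:ℝ) ^ n)⁻¹) ^ 2 *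
        ∑ x : F2n n, ∑ y : F2n n, ∏ j, (qx n k x (V j) * qx n k y (V j)) := by
      intro V
      unfold Pplanted
      rw [mul_pow, sq (∑ x : F2n n, _), Finset.sum_mul_sum]
      simp_rw [Finset.prod_mul_distrib]
    simp_rw [h1]
    rw [← Finset.mul_sum, Finset.sum_comm]
    have h2 : ∀ x : F2n n, ∑ V : Fin m → Flat n k, ∑ y : F2n n,
        ∏ j, (qx n k x (V j) * qx n k y (V j)) ≤
        (((Fintype.card (Flat n k) : ℝ) * pk k) ^ m)⁻¹ +
          (2:ℝ) ^ n * ((Fintype.card (Flat n k) : ℝ) ^ m)⁻¹ := by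
      intro x
      rw [Finset.sum_comm]
      have h3 : ∀ y : F2n n, ∑ V : Fin m → Flat n k,
          ∏ j, (qx n k x (V j) * qx n k y (V j)) ≤
          (if y = x then (((Fintype.card (Flat n k) : ℝ) * pk k) ^ m)⁻¹ else 0) +
            ((Fintype.card (Flat n k) : ℝ) ^ m)⁻¹ := by
        intro y
        rw [hprod (fun W => qx n k x W * qx n k y W)]
        split_ifs with h
        · subst h
          rw [sum_qxx hk hn, inv_pow]
          have : 0 ≤ ((Fintype.card (Flat n k) : ℝ) ^ m)⁻¹ := by positivity
          linarith
        · rw [zero_add, ← inv_pow]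
          exact pow_le_pow_left₀ (Finset.sum_nonneg fun W _ =>
            mul_nonneg (qx_nonneg _ _) (qx_nonneg _ _)) (sum_qxy hk hn x y h) m
      refine (Finset.sum_le_sum fun y _ => h3 y).trans_eq ?_
      rw [Finset.sum_add_distrib, Finset.sum_ite_eq' Finset.univ x]
      simp only [Finset.mem_univ, if_true, Finset.sum_const, Finset.card_univ, nsmul_eq_mul,
        card_F2n]
    refine (mul_le_mul_of_nonneg_left (Finset.sum_le_sum fun x _ => h2 x)
      (by positivity)).trans_eq ?_
    simp only [Finset.sum_const, Finset.card_univ, nsmul_eq_mul, card_F2n]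
    have : (0:ℝ) < 2 ^ n := by positivity
    field_simp
  have hcs := sq_sum_le_card_mul_sum_sq (s := (Finset.univ : Finset (Fin m → Flat n k)))
    (f := fun V => |Pplanted n k m V - Punif n k m V|)
  refine hcs.trans ?_
  simp_rw [sq_abs, hU, sub_sq]
  rw [Finset.sum_add_distrib, Finset.sum_sub_distrib, ← Finset.sum_mul, ← Finset.mul_sum, hsum]
  simp only [Finset.sum_const, Finset.card_univ, nsmul_eq_mul, hcard]
  rw [mul_pow] at hsq
  set Nm : ℝ := (Fintype.card (Flat n k) : ℝ) ^ m
  have hNm : 0 < Nm := by positivity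
  calc _ ≤ Nm * ((((2:ℝ) ^ n)⁻¹ * (Nm * pk k ^ m)⁻¹ + Nm⁻¹) - 2 * 1 * Nm⁻¹ + Nm * Nm⁻¹ ^ 2) := by
        gcongr
    _ = _ := by field_simp; ring

lemma tendsto_bound (k : ℕ) (hk : 1 ≤ k) (Δ : ℝ) (hΔ : 0 < Δ) (hΔk : Δ < DeltaK k) :
    Tendsto (fun n : ℕ => ((2:ℝ) ^ n)⁻¹ * (pk k ^ ⌈Δ * (n:ℝ)⌉₊)⁻¹) atTop (nhds 0) := by
  have hp := pk_pos hk
  have hlog : Real.log (pk k) < 0 := Real.log_neg hp (pk_lt k)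
  have h1 : Real.log (1/2) < Δ * Real.log (pk k) := by
    have : Δ < Real.log (1/2) / Real.log (pk k) := hΔk
    rwa [lt_div_iff_of_neg hlog] at this
  have h2 : (1/2 : ℝ) < pk k ^ Δ := by
    rw [Real.rpow_def_of_pos hp, ← Real.log_lt_iff_lt_exp (by norm_num)]
    linarith
  have hr : (2 * pk k ^ Δ)⁻¹ < 1 := inv_lt_one_of_one_lt₀ (by linarith)
  have hr0 : 0 ≤ (2 * pk k ^ Δ)⁻¹ := by positivity
  have hl := (tendsto_pow_atTop_nhds_zero_of_lt_one hr0 hr).mul_const ((pk k)⁻¹)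
  rw [zero_mul] at hl
  refine squeeze_zero (fun n => by positivity) (fun n => ?_) hl
  have h3 : pk k ^ (Δ * n + 1) ≤ pk k ^ ⌈Δ * (n:ℝ)⌉₊ := by
    rw [← Real.rpow_natCast (pk k) ⌈Δ * (n:ℝ)⌉₊]
    exact Real.rpow_le_rpow_of_exponent_ge hp (pk_lt k).le
      (Nat.ceil_lt_add_one (by positivity)).le
  have h4 : pk k ^ (Δ * n + 1) = (pk k ^ Δ) ^ n * pk k := by
    rw [Real.rpow_add hp, Real.rpow_one, Real.rpow_mul hp.le, Real.rpow_natCast]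
  rw [h4] at h3
  calc _ ≤ ((2:ℝ) ^ n)⁻¹ * ((pk k ^ Δ) ^ n * pk k)⁻¹ := by gcongr
    _ = _ := by rw [inv_pow, mul_pow, mul_inv, mul_inv, mul_assoc]

theorem stmt8 (k : ℕ) (hk : 1 ≤ k) (Δ : ℝ) (hΔ : 0 < Δ) (hΔk : Δ < DeltaK k) :
    Tendsto (fun n : ℕ =>
        (1/2 : ℝ) * ∑ V : Fin ⌈Δ * (n:ℝ)⌉₊ → Flat n k,
          |Pplanted n k ⌈Δ * (n:ℝ)⌉₊ V - Punif n k ⌈Δ * (n:ℝ)⌉₊ V|)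
      atTop (nhds 0) := by
  have hb := (tendsto_bound k hk Δ hΔ hΔk).sqrt
  rw [Real.sqrt_zero] at hb
  have hb2 := hb.const_mul (1/2 : ℝ)
  rw [mul_zero] at hb2
  refine squeeze_zero' (Eventually.of_forall fun n => by positivity) ?_ hb2
  filter_upwards [eventually_ge_atTop k] with n hn
  exact mul_le_mul_of_nonneg_left (Real.le_sqrt_of_sq_le (tv_sq _ hk hn)) (by norm_num)
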